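/- arXiv:solv-int/9909025 — 2 statements merged into one kernel-verified Lean document; each statement's English description precedes it below -/
import Mathlib

section
/- (Recursion theorem, algebraic part) Let A, B be symmetric nonsingular 2×2 cyclic matrices and K₂ a solution of the fundamental equation. Define l₁ = K₂ det(B), ∇k₁ = AB^{-1}∇(K₂ det B), k₂ = K₂ det(A), ∇l₂ = BA^{-1}∇(K₂ det A). Then k₂ = l₁·det(AB^{-1}) and ∇l₂ = ∇(l₁·Tr(AB^{-1}) - k₁), i.e., l₂ = l₁Tr(AB^{-1}) - k₁ up to an additive constant. -/
/-!
Write `T = tr (A adj B)`, so that `l₁ tr (AB⁻¹) = K₂ T`, and let `v_A = (2ar + c, 2aw + b)` for the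
cyclic matrix `A` with parameters `a, b, c, α, β, γ`. The argument rests on two facts.

* Cyclic matrices satisfy `∇(det A) = A v_A`, and, polarizing, `∇T = B v_A + A v_B`
  (`hasDerivAt_cyc_det_fst`, `hasDerivAt_cyc_mixed_fst` and their `snd` versions).
* The Cayley-Hamilton identity for `AB⁻¹`, cleared of denominators, is
  `B adj A + A adj B = T I` (`mul_adjugate_add_mul_adjugate`).

Expanding `BA⁻¹∇(K₂ det A) + AB⁻¹∇(K₂ det B)` by the product rule, the terms in `∇K₂` add up to
`T ∇K₂` by the second fact and the terms in `K₂` to `K₂ ∇T` by the first, so the sum is `∇(K₂ T)`.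
This is the gradient identity. A differentiable function on the plane whose two partial derivatives
vanish is constant, which gives the additive constant.
-/

open Matrix

/-- Partial derivative with respect to the first variable. -/
noncomputable def pr (f : ℝ → ℝ → ℝ) (r w : ℝ) : ℝ := deriv (fun x => f x w) r

/-- Partial derivative with respect to the second variable. -/
noncomputable def pw (f : ℝ → ℝ → ℝ) (r w : ℝ) : ℝ := deriv (fun y => f r y) w

/-- The left-hand side of the fundamental equation associated with the pair `(A,B)`. -/
noncomputable def fundLHS (A11 A12 A22 B11 B12 B22 K : ℝ → ℝ → ℝ) (r w : ℝ) : ℝ :=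
    2 * (A12 r w * B22 r w - A22 r w * B12 r w) * pr (pr K) r w
  - 2 * (A11 r w * B22 r w - A22 r w * B11 r w) * pw (pr K) r w
  + 2 * (A11 r w * B12 r w - A12 r w * B11 r w) * pw (pw K) r w
  + 3 * (A12 r w * pr B22 r w - B12 r w * pr A22 r w
        + A22 r w * pw B11 r w - B22 r w * pw A11 r w) * pr K r w
  - 3 * (A11 r w * pr B22 r w - B11 r w * pr A22 r w
        + A12 r w * pw B11 r w - B12 r w * pw A11 r w) * pw K r w
  + 3 * (pr A22 r w * pw B11 r w - pr B22 r w * pw A11 r w) * K r w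

/-- The cyclic matrix with parameters `a, b, c, α, β, γ` at the point `(r, w)`. -/
noncomputable def cyc (a b c α β γ r w : ℝ) : Matrix (Fin 2) (Fin 2) ℝ :=
  !![a * w ^ 2 + b * w + α, (-2 * a * r * w - b * r - c * w + β) / 2;
     (-2 * a * r * w - b * r - c * w + β) / 2, a * r ^ 2 + c * r + γ]

/-- The vector field `v_A` with `∇(det A) = A v_A` for the cyclic matrix `A`. -/
def cycVec (a b c r w : ℝ) : Fin 2 → ℝ := ![2 * a * r + c, 2 * a * w + b]

/-- A real quadratic is differentiated by comparing coefficients. -/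
lemma hasDerivAt_quadratic {f : ℝ → ℝ} {p q s x d : ℝ} (hf : ∀ y, f y = p * y ^ 2 + q * y + s)
    (hd : d = 2 * p * x + q) : HasDerivAt f d x := by
  obtain rfl : f = fun y => p * y ^ 2 + q * y + s := funext hf
  have h := ((((hasDerivAt_id x).pow 2).const_mul p).add
    ((hasDerivAt_id x).const_mul q)).add_const s
  refine h.congr_deriv ?_
  rw [hd]
  simp
  ring

lemma hasDerivAt_cyc_det_fst (a b c α β γ r w : ℝ) :
    HasDerivAt (fun x => (cyc a b c α β γ x w).det)
      ((cyc a b c α β γ r w *ᵥ cycVec a b c r w) 0) r := by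
  refine hasDerivAt_quadratic
    (p := (a * w ^ 2 + b * w + α) * a - (2 * a * w + b) ^ 2 / 4)
    (q := (a * w ^ 2 + b * w + α) * c + (2 * a * w + b) * (β - c * w) / 2)
    (s := (a * w ^ 2 + b * w + α) * γ - (β - c * w) ^ 2 / 4)
    (fun x => by simp only [cyc, Matrix.det_fin_two_of]; ring) ?_
  simp [cyc, cycVec]
  ring

lemma hasDerivAt_cyc_mixed_fst (a b c α β γ a' b' c' α' β' γ' r w : ℝ) :
    HasDerivAt
      (fun x => (cyc a b c α β γ x w * (cyc a' b' c' α' β' γ' x w).adjugate).trace)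
      ((cyc a' b' c' α' β' γ' r w *ᵥ cycVec a b c r w
        + cyc a b c α β γ r w *ᵥ cycVec a' b' c' r w) 0) r := by
  refine hasDerivAt_quadratic
    (p := (a * w ^ 2 + b * w + α) * a' + (a' * w ^ 2 + b' * w + α') * a
      - (2 * a * w + b) * (2 * a' * w + b') / 2)
    (q := (a * w ^ 2 + b * w + α) * c' + (a' * w ^ 2 + b' * w + α') * c
      + ((2 * a * w + b) * (β' - c' * w) + (2 * a' * w + b') * (β - c * w)) / 2)
    (s := (a * w ^ 2 + b * w + α) * γ' + (a' * w ^ 2 + b' * w + α') * γ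
      - (β - c * w) * (β' - c' * w) / 2)
    (fun x => by
      simp only [cyc, Matrix.adjugate_fin_two_of, Matrix.trace_fin_two, Matrix.mul_apply,
        Fin.sum_univ_two]
      simp
      ring) ?_
  simp [cyc, cycVec]
  ring

lemma hasDerivAt_cyc_det_snd (a b c α β γ r w : ℝ) :
    HasDerivAt (fun x => (cyc a b c α β γ r x).det)
      ((cyc a b c α β γ r w *ᵥ cycVec a b c r w) 1) w := by
  refine hasDerivAt_quadratic
    (p := (a * r ^ 2 + c * r + γ) * a - (2 * a * r + c) ^ 2 / 4)
    (q := (a * r ^ 2 + c * r + γ) * b + (2 * a * r + c) * (β - b * r) / 2)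
    (s := (a * r ^ 2 + c * r + γ) * α - (β - b * r) ^ 2 / 4)
    (fun x => by simp only [cyc, Matrix.det_fin_two_of]; ring) ?_
  simp [cyc, cycVec]
  ring

lemma hasDerivAt_cyc_mixed_snd (a b c α β γ a' b' c' α' β' γ' r w : ℝ) :
    HasDerivAt
      (fun x => (cyc a b c α β γ r x * (cyc a' b' c' α' β' γ' r x).adjugate).trace)
      ((cyc a' b' c' α' β' γ' r w *ᵥ cycVec a b c r w
        + cyc a b c α β γ r w *ᵥ cycVec a' b' c' r w) 1) w := by
  refine hasDerivAt_quadratic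
    (p := (a * r ^ 2 + c * r + γ) * a' + (a' * r ^ 2 + c' * r + γ') * a
      - (2 * a * r + c) * (2 * a' * r + c') / 2)
    (q := (a * r ^ 2 + c * r + γ) * b' + (a' * r ^ 2 + c' * r + γ') * b
      + ((2 * a * r + c) * (β' - b' * r) + (2 * a' * r + c') * (β - b * r)) / 2)
    (s := (a * r ^ 2 + c * r + γ) * α' + (a' * r ^ 2 + c' * r + γ') * α
      - (β - b * r) * (β' - b' * r) / 2)
    (fun x => by
      simp only [cyc, Matrix.adjugate_fin_two_of, Matrix.trace_fin_two, Matrix.mul_apply,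
        Fin.sum_univ_two]
      simp
      ring) ?_
  simp [cyc, cycVec]
  ring

/-- The polarized Cayley-Hamilton identity for `2 × 2` matrices. -/
lemma mul_adjugate_add_mul_adjugate (A B : Matrix (Fin 2) (Fin 2) ℝ) :
    B * A.adjugate + A * B.adjugate = (A * B.adjugate).trace • (1 : Matrix (Fin 2) (Fin 2) ℝ) := by
  ext i j
  fin_cases i <;> fin_cases j <;>
    simp [Matrix.adjugate_fin_two, Matrix.trace_fin_two, Matrix.mul_apply, Fin.sum_univ_two] <;>
    ring

/-- With `g = ∇K`, `A p = ∇(det A)` and `B q = ∇(det B)`, this reads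
`BA⁻¹∇(K det A) = ∇(K T) - AB⁻¹∇(K det B)`. -/
lemma mulVec_inv_identity (A B : Matrix (Fin 2) (Fin 2) ℝ) (hA : A.det ≠ 0) (hB : B.det ≠ 0)
    (k : ℝ) (g p q : Fin 2 → ℝ) :
    (B * A⁻¹) *ᵥ (A.det • g + k • A *ᵥ p)
      = (A * B.adjugate).trace • g + k • (B *ᵥ p + A *ᵥ q)
        - (A * B⁻¹) *ᵥ (B.det • g + k • B *ᵥ q) := by
  have key : ∀ M N : Matrix (Fin 2) (Fin 2) ℝ, M.det ≠ 0 → ∀ u : Fin 2 → ℝ,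
      (N * M⁻¹) *ᵥ (M.det • g + k • M *ᵥ u) = (N * M.adjugate) *ᵥ g + k • N *ᵥ u := by
    intro M N hM u
    have h1 : N * M⁻¹ * M = N := by
      rw [Matrix.mul_assoc, Matrix.nonsing_inv_mul M (isUnit_iff_ne_zero.mpr hM), Matrix.mul_one]
    have h2 : M.det • (N * M⁻¹) = N * M.adjugate := by
      rw [Matrix.inv_def, Ring.inverse_eq_inv', Matrix.mul_smul, smul_smul, mul_inv_cancel₀ hM,
        one_smul]
    rw [Matrix.mulVec_add, Matrix.mulVec_smul, Matrix.mulVec_smul, Matrix.mulVec_mulVec, h1,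
      ← Matrix.smul_mulVec, h2]
  have hCH := congrArg (· *ᵥ g) (mul_adjugate_add_mul_adjugate A B)
  simp only [Matrix.add_mulVec, Matrix.smul_mulVec, Matrix.one_mulVec] at hCH
  rw [key A B hA p, key B A hB q, ← hCH, smul_add]
  abel

/-- Clearing the denominator in `tr (AB⁻¹)`. -/
lemma det_mul_trace_mul_inv (A B : Matrix (Fin 2) (Fin 2) ℝ) (hB : B.det ≠ 0) :
    B.det * (A * B⁻¹).trace = (A * B.adjugate).trace := by
  rw [Matrix.inv_def, Ring.inverse_eq_inv', Matrix.mul_smul, Matrix.trace_smul, smul_eq_mul,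
    mul_inv_cancel_left₀ hB]

lemma hasDerivAt_slice_fst {f : ℝ → ℝ → ℝ}
    (hf : ContDiff ℝ (⊤ : ℕ∞) fun p : ℝ × ℝ => f p.1 p.2) (r w : ℝ) :
    HasDerivAt (fun x => f x w) (pr f r w) r := by
  have h : Differentiable ℝ fun x => f x w :=
    (hf.differentiable (by simp)).comp (differentiable_id.prodMk (differentiable_const w))
  exact (h r).hasDerivAt

lemma hasDerivAt_slice_snd {f : ℝ → ℝ → ℝ}
    (hf : ContDiff ℝ (⊤ : ℕ∞) fun p : ℝ × ℝ => f p.1 p.2) (r w : ℝ) :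
    HasDerivAt (fun y => f r y) (pw f r w) w := by
  have h : Differentiable ℝ fun y => f r y :=
    (hf.differentiable (by simp)).comp ((differentiable_const r).prodMk differentiable_id)
  exact (h w).hasDerivAt

/-- Functions on the plane with the same partial derivatives differ by a constant. -/
lemma exists_eq_add_const {f g : ℝ → ℝ → ℝ} {d e : ℝ → ℝ → ℝ}
    (hf1 : ∀ r w, HasDerivAt (fun x => f x w) (d r w) r)
    (hg1 : ∀ r w, HasDerivAt (fun x => g x w) (d r w) r)
    (hf2 : ∀ r w, HasDerivAt (fun y => f r y) (e r w) w)
    (hg2 : ∀ r w, HasDerivAt (fun y => g r y) (e r w) w) :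
    ∃ C : ℝ, ∀ r w, f r w = g r w + C := by
  have h1 : ∀ r w, f r w - g r w = f 0 w - g 0 w := fun r w =>
    is_const_of_deriv_eq_zero (f := fun x => f x w - g x w)
      (fun x => ((hf1 x w).sub (hg1 x w)).differentiableAt)
      (fun x => ((hf1 x w).sub (hg1 x w)).deriv.trans (sub_self _)) r 0
  have h2 : ∀ w, f 0 w - g 0 w = f 0 0 - g 0 0 := fun w =>
    is_const_of_deriv_eq_zero (f := fun y => f 0 y - g 0 y)
      (fun y => ((hf2 0 y).sub (hg2 0 y)).differentiableAt)
      (fun y => ((hf2 0 y).sub (hg2 0 y)).deriv.trans (sub_self _)) w 0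
  exact ⟨f 0 0 - g 0 0, fun r w => by linarith [h1 r w, h2 w]⟩

/-- recursion theorem, algebraic part: with `l₁ = K₂·det B`,
`∇k₁ = AB⁻¹∇(K₂·det B)`, `k₂ = K₂·det A`, `∇l₂ = BA⁻¹∇(K₂·det A)`, one has
`k₂ = l₁·det(AB⁻¹)` and `∇l₂ = ∇(l₁·Tr(AB⁻¹) - k₁)`, i.e.
`l₂ = l₁·Tr(AB⁻¹) - k₁` up to an additive constant. -/
theorem stmt_9 (a1 b1 c1 α1 β1 γ1 a2 b2 c2 α2 β2 γ2 : ℝ)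
    (A B : ℝ → ℝ → Matrix (Fin 2) (Fin 2) ℝ)
    (hA : A = fun r w =>
      !![a1 * w ^ 2 + b1 * w + α1, (-2 * a1 * r * w - b1 * r - c1 * w + β1) / 2;
         (-2 * a1 * r * w - b1 * r - c1 * w + β1) / 2, a1 * r ^ 2 + c1 * r + γ1])
    (hB : B = fun r w =>
      !![a2 * w ^ 2 + b2 * w + α2, (-2 * a2 * r * w - b2 * r - c2 * w + β2) / 2;
         (-2 * a2 * r * w - b2 * r - c2 * w + β2) / 2, a2 * r ^ 2 + c2 * r + γ2])
    (hdA : ∀ r w, (A r w).det ≠ 0)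
    (hdB : ∀ r w, (B r w).det ≠ 0)
    (K2 : ℝ → ℝ → ℝ)
    (hK2sm : ContDiff ℝ (⊤ : ℕ∞) fun p : ℝ × ℝ => K2 p.1 p.2)
    (hK2 : ∀ r w, fundLHS (fun r w => A r w 0 0) (fun r w => A r w 0 1)
        (fun r w => A r w 1 1) (fun r w => B r w 0 0) (fun r w => B r w 0 1)
        (fun r w => B r w 1 1) K2 r w = 0)
    (l1 k1 k2 l2 : ℝ → ℝ → ℝ)
    (hl1 : l1 = fun r w => K2 r w * (B r w).det)
    (hk2 : k2 = fun r w => K2 r w * (A r w).det)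
    (hk1 : ∀ r w, ![pr k1 r w, pw k1 r w]
        = (A r w * (B r w)⁻¹) *ᵥ ![pr l1 r w, pw l1 r w])
    (hl2 : ∀ r w, ![pr l2 r w, pw l2 r w]
        = (B r w * (A r w)⁻¹) *ᵥ ![pr k2 r w, pw k2 r w])
    (hk1sm : ContDiff ℝ (⊤ : ℕ∞) fun p : ℝ × ℝ => k1 p.1 p.2)
    (hl2sm : ContDiff ℝ (⊤ : ℕ∞) fun p : ℝ × ℝ => l2 p.1 p.2) :
    (∀ r w, k2 r w = l1 r w * (A r w * (B r w)⁻¹).det)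
    ∧ (∀ r w, ![pr l2 r w, pw l2 r w]
        = ![pr (fun r w => l1 r w * (A r w * (B r w)⁻¹).trace - k1 r w) r w,
           pw (fun r w => l1 r w * (A r w * (B r w)⁻¹).trace - k1 r w) r w])
    ∧ (∃ C : ℝ, ∀ r w,
        l2 r w = l1 r w * (A r w * (B r w)⁻¹).trace - k1 r w + C) := by
  replace hA : A = cyc a1 b1 c1 α1 β1 γ1 := hA
  replace hB : B = cyc a2 b2 c2 α2 β2 γ2 := hB
  have hT : (fun r w => l1 r w * (A r w * (B r w)⁻¹).trace - k1 r w)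
      = fun r w => K2 r w * (A r w * (B r w).adjugate).trace - k1 r w := by
    funext r w
    rw [hl1, ← det_mul_trace_mul_inv _ _ (hdB r w)]
    ring
  have hgrad : ∀ r w, ![pr l2 r w, pw l2 r w]
      = (A r w * (B r w).adjugate).trace • ![pr K2 r w, pw K2 r w]
        + K2 r w • (B r w *ᵥ cycVec a1 b1 c1 r w + A r w *ᵥ cycVec a2 b2 c2 r w)
        - ![pr k1 r w, pw k1 r w] := by
    intro r w
    have hk : ![pr k2 r w, pw k2 r w] = (A r w).det • ![pr K2 r w, pw K2 r w]
        + K2 r w • A r w *ᵥ cycVec a1 b1 c1 r w := by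
      subst hA hk2
      have e1 := ((hasDerivAt_slice_fst hK2sm r w).mul
        (hasDerivAt_cyc_det_fst a1 b1 c1 α1 β1 γ1 r w)).deriv
      have e2 := ((hasDerivAt_slice_snd hK2sm r w).mul
        (hasDerivAt_cyc_det_snd a1 b1 c1 α1 β1 γ1 r w)).deriv
      ext i
      fin_cases i
      · exact e1.trans (by simp [mul_comm])
      · exact e2.trans (by simp [mul_comm])
    have hl : ![pr l1 r w, pw l1 r w] = (B r w).det • ![pr K2 r w, pw K2 r w]
        + K2 r w • B r w *ᵥ cycVec a2 b2 c2 r w := by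
      subst hB hl1
      have e1 := ((hasDerivAt_slice_fst hK2sm r w).mul
        (hasDerivAt_cyc_det_fst a2 b2 c2 α2 β2 γ2 r w)).deriv
      have e2 := ((hasDerivAt_slice_snd hK2sm r w).mul
        (hasDerivAt_cyc_det_snd a2 b2 c2 α2 β2 γ2 r w)).deriv
      ext i
      fin_cases i
      · exact e1.trans (by simp [mul_comm])
      · exact e2.trans (by simp [mul_comm])
    rw [hl2, hk1, hk, hl]
    exact mulVec_inv_identity _ _ (hdA r w) (hdB r w) _ _ _ _
  have hR1 : ∀ r w, HasDerivAt
      (fun x => K2 x w * (A x w * (B x w).adjugate).trace - k1 x w) (pr l2 r w) r := by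
    intro r w
    have h0 := congrFun (hgrad r w) 0
    subst hA hB
    refine (((hasDerivAt_slice_fst hK2sm r w).mul
      (hasDerivAt_cyc_mixed_fst a1 b1 c1 α1 β1 γ1 a2 b2 c2 α2 β2 γ2 r w)).sub
      (hasDerivAt_slice_fst hk1sm r w)).congr_deriv (Eq.trans ?_ h0.symm)
    simp [mul_comm]
  have hR2 : ∀ r w, HasDerivAt
      (fun y => K2 r y * (A r y * (B r y).adjugate).trace - k1 r y) (pw l2 r w) w := by
    intro r w
    have h0 := congrFun (hgrad r w) 1
    subst hA hB
    refine (((hasDerivAt_slice_snd hK2sm r w).mul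
      (hasDerivAt_cyc_mixed_snd a1 b1 c1 α1 β1 γ1 a2 b2 c2 α2 β2 γ2 r w)).sub
      (hasDerivAt_slice_snd hk1sm r w)).congr_deriv (Eq.trans ?_ h0.symm)
    simp [mul_comm]
  refine ⟨fun r w => ?_, fun r w => ?_, ?_⟩
  · rw [hk2, hl1, Matrix.det_mul, Matrix.det_nonsing_inv, Ring.inverse_eq_inv']
    field_simp [hdB r w]
  · rw [hT]
    congr 1
    · exact (hR1 r w).deriv.symm
    · congr 1
      exact (hR2 r w).deriv.symm
  · obtain ⟨C, hC⟩ := exists_eq_add_const (hasDerivAt_slice_fst hl2sm) hR1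
      (hasDerivAt_slice_snd hl2sm) hR2
    exact ⟨C, fun r w => by rw [hC r w, ← congrFun (congrFun hT r) w]⟩
end

section
/- The 5×5 antisymmetric matrix Π_A on the phase space (q₁,q₂,p₁,p₂,d), with blocks Π_A(q-row, p-column) = -(λ/2)G(q), Π_A(q-row, d-column) = p, Π_A(p-row, p-column) = -(λ/2)F(q,p), Π_A(p-row, d-column) = M(q) - (λ d/2)A^{-1}∇(det A), where G = det(A)A^{-1}, F₁₂ = (1/2)(∂A₂₂/∂q₁ · p₂ - ∂A₁₁/∂q₂ · p₁), F = -Fᵗ, and M = -(1/2)A^{-1}∇k, satisfies the Jacobi identity and hence defines a Poisson structure, provided A is a symmetric 2×2 matrix satisfying the cyclic conditions. -/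
/-!
By the Leibniz rule, the cyclic sum of double brackets consists of terms with a Hessian of `f`, `g`
or `h`, which cancel in pairs since Hessians are symmetric and `Π_A` is antisymmetric (`brk_brk`,
`jacobi_of_jac`), and of the Jacobiator of the coordinate functions contracted with the three
differentials. The Jacobiator is totally antisymmetric (`jac_eq_zero`), so ten coordinate
identities remain.

The cyclic form of `A` gives `∇(det A) = A (2aq₁ + c, 2aq₂ + b)` (`pr_det`, `pw_det`), so
`A⁻¹∇(det A)` is polynomial and `Π_A` takes the form `PiN`: polynomial apart from the force
`m = -(1/2)A⁻¹∇k`. Nine of the ten identities then hold for every force depending on `q` only,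
and the one for `(p₁, p₂, d)` amounts to the closedness of the covector `A m` (`jac_PiN`), which
equals `-(1/2)∇k` (`exists_force`).
-/

open Matrix
open scoped BigOperators

/-- Partial derivative on the extended phase space `ℝ⁵` (`q₁,q₂,p₁,p₂,d`). -/
noncomputable def pd5 (i : Fin 5) (f : (Fin 5 → ℝ) → ℝ) (x : Fin 5 → ℝ) : ℝ :=
  fderiv ℝ f x (Pi.single i 1)

/-- The `5×5` antisymmetric matrix `Π_A` of the qLN theory, determined by the cyclic
matrix `A` (with parameters `a,b,c,al,be,ga`), the quasi-potential `k` and `λ = lam`. -/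
noncomputable def PiA (a b c al be ga lam : ℝ) (k : ℝ → ℝ → ℝ) (x : Fin 5 → ℝ) :
    Matrix (Fin 5) (Fin 5) ℝ :=
  let q1 := x 0; let q2 := x 1; let p1 := x 2; let p2 := x 3; let d := x 4
  let A11 : ℝ → ℝ → ℝ := fun _ w => a * w ^ 2 + b * w + al
  let A12 : ℝ → ℝ → ℝ := fun r w => (-2 * a * r * w - b * r - c * w + be) / 2
  let A22 : ℝ → ℝ → ℝ := fun r _ => a * r ^ 2 + c * r + ga
  let D : ℝ → ℝ → ℝ := fun r w => A11 r w * A22 r w - A12 r w ^ 2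
  -- components of `A⁻¹f` for a covector `f = (fr, fw)`
  let inv1 : ℝ → ℝ → ℝ := fun fr fw => (A22 q1 q2 * fr - A12 q1 q2 * fw) / D q1 q2
  let inv2 : ℝ → ℝ → ℝ := fun fr fw => (-(A12 q1 q2) * fr + A11 q1 q2 * fw) / D q1 q2
  -- the force `M = -(1/2)A⁻¹∇k` and `M̂ = M - (λd/2)A⁻¹∇(det A)`
  let M1 := -(1/2) * inv1 (pr k q1 q2) (pw k q1 q2)
  let M2 := -(1/2) * inv2 (pr k q1 q2) (pw k q1 q2)
  let Mh1 := M1 - (lam * d / 2) * inv1 (pr D q1 q2) (pw D q1 q2)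
  let Mh2 := M2 - (lam * d / 2) * inv2 (pr D q1 q2) (pw D q1 q2)
  -- `G = det(A)A⁻¹` and `F₁₂ = (1/2)(∂₁A₂₂·p₂ - ∂₂A₁₁·p₁)`
  let G11 := A22 q1 q2; let G12 := -(A12 q1 q2); let G22 := A11 q1 q2
  let F12 := (1/2) * (pr A22 q1 q2 * p2 - pw A11 q1 q2 * p1)
  !![0, 0, -(lam/2) * G11, -(lam/2) * G12, p1;
     0, 0, -(lam/2) * G12, -(lam/2) * G22, p2;
     (lam/2) * G11, (lam/2) * G12, 0, -(lam/2) * F12, Mh1;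
     (lam/2) * G12, (lam/2) * G22, (lam/2) * F12, 0, Mh2;
     -p1, -p2, -Mh1, -Mh2, 0]

/-- The bracket `{f,g}_Π = (∇f)ᵗ Π ∇g` associated with a matrix-valued field `Π`. -/
noncomputable def brk (Pi : (Fin 5 → ℝ) → Matrix (Fin 5) (Fin 5) ℝ)
    (f g : (Fin 5 → ℝ) → ℝ) (x : Fin 5 → ℝ) : ℝ :=
  ∑ i, ∑ j, pd5 i f x * Pi x i j * pd5 j g x

/-! ### Partial derivatives on the phase space -/

lemma pd5_eq_lineDeriv {f : (Fin 5 → ℝ) → ℝ} {x : Fin 5 → ℝ} (hf : DifferentiableAt ℝ f x)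
    (i : Fin 5) : pd5 i f x = deriv (fun t : ℝ => f (x + t • Pi.single i 1)) 0 :=
  hf.lineDeriv_eq_fderiv.symm

lemma pd5_eq_zero {f : (Fin 5 → ℝ) → ℝ} {x : Fin 5 → ℝ} (hf : DifferentiableAt ℝ f x)
    (i : Fin 5) (h : ∀ t : ℝ, f (x + t • Pi.single i 1) = f x) : pd5 i f x = 0 := by
  rw [pd5_eq_lineDeriv hf]
  simp [h]

section calculus

variable {f g : (Fin 5 → ℝ) → ℝ} {x : Fin 5 → ℝ}

lemma pd5_add (hf : DifferentiableAt ℝ f x) (hg : DifferentiableAt ℝ g x) (i : Fin 5) :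
    pd5 i (fun y => f y + g y) x = pd5 i f x + pd5 i g x := by
  simp only [pd5]; rw [fderiv_fun_add hf hg]; rfl

lemma pd5_sub (hf : DifferentiableAt ℝ f x) (hg : DifferentiableAt ℝ g x) (i : Fin 5) :
    pd5 i (fun y => f y - g y) x = pd5 i f x - pd5 i g x := by
  simp only [pd5]; rw [fderiv_fun_sub hf hg]; rfl

lemma pd5_neg (i : Fin 5) : pd5 i (fun y => -f y) x = -pd5 i f x := by
  simp only [pd5]; rw [fderiv_fun_neg]; rfl

lemma pd5_mul (hf : DifferentiableAt ℝ f x) (hg : DifferentiableAt ℝ g x) (i : Fin 5) :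
    pd5 i (fun y => f y * g y) x = pd5 i f x * g x + f x * pd5 i g x := by
  simp only [pd5]; rw [fderiv_fun_mul hf hg]
  simp only [_root_.add_apply, _root_.smul_apply, smul_eq_mul]
  ring

lemma pd5_const (i : Fin 5) (r : ℝ) : pd5 i (fun _ => r) x = 0 := by
  simp [pd5]

lemma pd5_coord (i j : Fin 5) : pd5 i (fun y => y j) x = if j = i then 1 else 0 := by
  have h : HasFDerivAt (fun y : Fin 5 → ℝ => y j)
      (ContinuousLinearMap.proj (R := ℝ) (φ := fun _ : Fin 5 => ℝ) j) x :=
    hasFDerivAt_apply j x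
  simp [pd5, h.fderiv, Pi.single_apply]

lemma pd5_sum {ι : Type*} (s : Finset ι) {F : ι → (Fin 5 → ℝ) → ℝ}
    (hF : ∀ j ∈ s, DifferentiableAt ℝ (F j) x) (i : Fin 5) :
    pd5 i (fun y => ∑ j ∈ s, F j y) x = ∑ j ∈ s, pd5 i (F j) x := by
  simp only [pd5]; rw [fderiv_fun_sum hF]
  simp

lemma contDiff_pd5 (hf : ContDiff ℝ (⊤ : ℕ∞) f) (i : Fin 5) :
    ContDiff ℝ (⊤ : ℕ∞) (pd5 i f) :=
  (hf.fderiv_right (m := (⊤ : ℕ∞)) (by simp)).clm_apply contDiff_const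

lemma differentiable_pd5 (hf : ContDiff ℝ (⊤ : ℕ∞) f) (i : Fin 5) :
    Differentiable ℝ (pd5 i f) :=
  (contDiff_pd5 hf i).differentiable (by simp)

lemma pd5_comm (hf : ContDiff ℝ (⊤ : ℕ∞) f) (i j : Fin 5) :
    pd5 i (pd5 j f) x = pd5 j (pd5 i f) x := by
  have hd : DifferentiableAt ℝ (fderiv ℝ f) x :=
    (hf.fderiv_right (m := (⊤ : ℕ∞)) (by simp)).differentiable (by simp) x
  have key : ∀ i j : Fin 5, pd5 i (pd5 j f) x
      = fderiv ℝ (fderiv ℝ f) x (Pi.single i 1) (Pi.single j 1) := by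
    intro i j
    change fderiv ℝ (fun y => fderiv ℝ f y (Pi.single j 1)) x (Pi.single i 1) = _
    rw [fderiv_clm_apply hd (differentiableAt_const _)]
    simp
  rw [key, key]
  refine hf.contDiffAt.isSymmSndFDerivAt ?_ _ _
  simp only [minSmoothness_of_isRCLikeNormedField]
  exact WithTop.coe_le_coe.2 (le_top (a := (2 : ℕ∞)))

end calculus

/-! ### Reduction to coordinate functions -/

/-- The Jacobiator of the coordinate functions `x_i, x_j, x_l`. -/
noncomputable def jac (Pi : (Fin 5 → ℝ) → Matrix (Fin 5) (Fin 5) ℝ) (x : Fin 5 → ℝ)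
    (i j l : Fin 5) : ℝ :=
  ∑ m, (pd5 m (fun y => Pi y i j) x * Pi x m l + pd5 m (fun y => Pi y j l) x * Pi x m i
    + pd5 m (fun y => Pi y l i) x * Pi x m j)

lemma pd5_brk {Pi : (Fin 5 → ℝ) → Matrix (Fin 5) (Fin 5) ℝ}
    (hPi : ∀ i j, Differentiable ℝ fun y => Pi y i j)
    {f g : (Fin 5 → ℝ) → ℝ} (hf : ContDiff ℝ (⊤ : ℕ∞) f) (hg : ContDiff ℝ (⊤ : ℕ∞) g)
    (x : Fin 5 → ℝ) (m : Fin 5) :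
    pd5 m (brk Pi f g) x = ∑ i, ∑ j, (pd5 m (pd5 i f) x * Pi x i j * pd5 j g x
      + pd5 i f x * pd5 m (fun y => Pi y i j) x * pd5 j g x
      + pd5 i f x * Pi x i j * pd5 m (pd5 j g) x) := by
  have hf' := fun i => differentiable_pd5 hf i
  have hg' := fun i => differentiable_pd5 hg i
  change pd5 m (fun y => ∑ i, ∑ j, pd5 i f y * Pi y i j * pd5 j g y) x = _
  rw [pd5_sum _ (fun i _ => by fun_prop)]
  refine Finset.sum_congr rfl fun i _ => ?_
  rw [pd5_sum _ (fun j _ => by fun_prop)]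
  refine Finset.sum_congr rfl fun j _ => ?_
  rw [pd5_mul (by fun_prop) (by fun_prop), pd5_mul (by fun_prop) (by fun_prop)]
  ring

/-- The double bracket splits into a part with first derivatives of `Pi` only, which is
tensorial in the differentials, and two Hessian terms. The second Hessian term changes sign
because `Pi` is antisymmetric. -/
lemma brk_brk {Pi : (Fin 5 → ℝ) → Matrix (Fin 5) (Fin 5) ℝ}
    (hPi : ∀ i j, Differentiable ℝ fun y => Pi y i j)
    (hanti : ∀ y i j, Pi y i j = -Pi y j i)
    {f g : (Fin 5 → ℝ) → ℝ} (hf : ContDiff ℝ (⊤ : ℕ∞) f) (hg : ContDiff ℝ (⊤ : ℕ∞) g)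
    (h : (Fin 5 → ℝ) → ℝ) (x : Fin 5 → ℝ) :
    brk Pi (brk Pi f g) h x
      = (∑ i, ∑ j, ∑ l, pd5 i f x * pd5 j g x * pd5 l h x *
          ∑ m, pd5 m (fun y => Pi y i j) x * Pi x m l)
        + (∑ m, ∑ n, pd5 m (pd5 n f) x * (∑ l, Pi x m l * pd5 l h x)
            * (∑ l, Pi x n l * pd5 l g x))
        - ∑ m, ∑ n, pd5 m (pd5 n g) x * (∑ l, Pi x m l * pd5 l h x)
            * (∑ l, Pi x n l * pd5 l f x) := by
  have e1 : brk Pi (brk Pi f g) h x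
      = ∑ m, pd5 m (brk Pi f g) x * ∑ l, Pi x m l * pd5 l h x := by
    simp only [brk, Finset.mul_sum, mul_assoc]
  have e2 : ∀ m, pd5 m (brk Pi f g) x
      = (∑ n, pd5 m (pd5 n f) x * ∑ l, Pi x n l * pd5 l g x)
        + (∑ i, ∑ j, pd5 i f x * pd5 m (fun y => Pi y i j) x * pd5 j g x)
        - ∑ n, pd5 m (pd5 n g) x * ∑ l, Pi x n l * pd5 l f x := by
    intro m
    rw [pd5_brk hPi hf hg]
    simp only [Finset.sum_add_distrib]
    have e3 : ∑ i, ∑ j, pd5 i f x * Pi x i j * pd5 m (pd5 j g) x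
        = - ∑ n, pd5 m (pd5 n g) x * ∑ l, Pi x n l * pd5 l f x := by
      rw [Finset.sum_comm, ← Finset.sum_neg_distrib]
      refine Finset.sum_congr rfl fun j _ => ?_
      rw [Finset.mul_sum, ← Finset.sum_neg_distrib]
      refine Finset.sum_congr rfl fun i _ => ?_
      rw [hanti x i j]; ring
    rw [e3]
    simp only [Finset.mul_sum, mul_assoc]
    ring
  have e4 : (∑ i, ∑ j, ∑ l, pd5 i f x * pd5 j g x * pd5 l h x *
          ∑ m, pd5 m (fun y => Pi y i j) x * Pi x m l)
      = ∑ m, (∑ i, ∑ j, pd5 i f x * pd5 m (fun y => Pi y i j) x * pd5 j g x)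
          * ∑ l, Pi x m l * pd5 l h x := by
    simp_rw [Finset.sum_mul, Finset.mul_sum]
    conv_rhs => rw [Finset.sum_comm]
    refine Finset.sum_congr rfl fun i _ => ?_
    conv_rhs => rw [Finset.sum_comm]
    refine Finset.sum_congr rfl fun j _ => ?_
    conv_rhs => rw [Finset.sum_comm]
    refine Finset.sum_congr rfl fun l _ => Finset.sum_congr rfl fun m _ => ?_
    ring
  rw [e1, e4]
  simp only [e2, sub_mul, add_mul, Finset.sum_add_distrib, Finset.sum_sub_distrib, Finset.sum_mul]
  have e5 : ∀ (P Q : Fin 5 → ℝ) (H : Fin 5 → Fin 5 → ℝ),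
      (∑ m, ∑ n, H m n * P n * Q m) = ∑ m, ∑ n, H m n * Q m * P n := by
    intro P Q H
    exact Finset.sum_congr rfl fun m _ => Finset.sum_congr rfl fun n _ => by ring
  rw [e5, e5]
  ring

/-- An antisymmetric bivector satisfies the Jacobi identity for all smooth functions as soon as
it does for the coordinate functions: the Hessian terms cancel in pairs. -/
lemma jacobi_of_jac {Pi : (Fin 5 → ℝ) → Matrix (Fin 5) (Fin 5) ℝ}
    (hPi : ∀ i j, Differentiable ℝ fun y => Pi y i j)
    (hanti : ∀ y i j, Pi y i j = -Pi y j i) (x : Fin 5 → ℝ)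
    (hJ : ∀ i j l, jac Pi x i j l = 0)
    {f g h : (Fin 5 → ℝ) → ℝ} (hf : ContDiff ℝ (⊤ : ℕ∞) f) (hg : ContDiff ℝ (⊤ : ℕ∞) g)
    (hh : ContDiff ℝ (⊤ : ℕ∞) h) :
    brk Pi (brk Pi f g) h x + brk Pi (brk Pi g h) f x + brk Pi (brk Pi h f) g x = 0 := by
  rw [brk_brk hPi hanti hf hg, brk_brk hPi hanti hg hh, brk_brk hPi hanti hh hf]
  have hsymm : ∀ (u : (Fin 5 → ℝ) → ℝ), ContDiff ℝ (⊤ : ℕ∞) u → ∀ P Q : Fin 5 → ℝ,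
      ∑ m, ∑ n, pd5 m (pd5 n u) x * P m * Q n = ∑ m, ∑ n, pd5 m (pd5 n u) x * Q m * P n := by
    intro u hu P Q
    rw [Finset.sum_comm]
    refine Finset.sum_congr rfl fun m _ => Finset.sum_congr rfl fun n _ => ?_
    rw [pd5_comm hu]; ring
  have hcyc : (∑ i, ∑ j, ∑ l, pd5 i f x * pd5 j g x * pd5 l h x *
          ∑ m, pd5 m (fun y => Pi y i j) x * Pi x m l)
      + (∑ i, ∑ j, ∑ l, pd5 i g x * pd5 j h x * pd5 l f x *
          ∑ m, pd5 m (fun y => Pi y i j) x * Pi x m l)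
      + (∑ i, ∑ j, ∑ l, pd5 i h x * pd5 j f x * pd5 l g x *
          ∑ m, pd5 m (fun y => Pi y i j) x * Pi x m l) = 0 := by
    have hA : ∀ i j l, (∑ m, pd5 m (fun y => Pi y i j) x * Pi x m l)
        + (∑ m, pd5 m (fun y => Pi y j l) x * Pi x m i)
        + (∑ m, pd5 m (fun y => Pi y l i) x * Pi x m j) = 0 := by
      intro i j l
      have := hJ i j l
      simpa only [jac, Finset.sum_add_distrib] using this
    have r1 : ∀ T : Fin 5 → Fin 5 → Fin 5 → ℝ,
        ∑ i, ∑ j, ∑ l, T i j l = ∑ i, ∑ j, ∑ l, T j l i := by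
      intro T
      conv_rhs => rw [Finset.sum_comm]
      exact Finset.sum_congr rfl fun j _ => Finset.sum_comm
    have key : ∀ (A : Fin 5 → Fin 5 → Fin 5 → ℝ) (F G H : Fin 5 → ℝ),
        (∀ i j l, A i j l + A j l i + A l i j = 0) →
        (∑ i, ∑ j, ∑ l, F i * G j * H l * A i j l) + (∑ i, ∑ j, ∑ l, G i * H j * F l * A i j l)
          + (∑ i, ∑ j, ∑ l, H i * F j * G l * A i j l) = 0 := by
      intro A F G H hA
      rw [r1 fun i j l => G i * H j * F l * A i j l, r1 fun i j l => H i * F j * G l * A i j l,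
        r1 fun i j l => H j * F l * G i * A j l i]
      simp only [← Finset.sum_add_distrib]
      refine Finset.sum_eq_zero fun i _ => Finset.sum_eq_zero fun j _ =>
        Finset.sum_eq_zero fun l _ => ?_
      linear_combination F i * G j * H l * hA i j l
    exact key (fun i j l => ∑ m, pd5 m (fun y => Pi y i j) x * Pi x m l) _ _ _ hA
  rw [hsymm f hf (fun m => ∑ l, Pi x m l * pd5 l h x),
    hsymm g hg (fun m => ∑ l, Pi x m l * pd5 l h x),
    hsymm h hh (fun m => ∑ l, Pi x m l * pd5 l g x)]
  linear_combination hcyc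

/-- The Jacobiator of an antisymmetric matrix is totally antisymmetric, so increasing triples of
indices suffice. -/
lemma jac_eq_zero {Pi : (Fin 5 → ℝ) → Matrix (Fin 5) (Fin 5) ℝ}
    (hanti : ∀ y i j, Pi y i j = -Pi y j i) (x : Fin 5 → ℝ)
    (hJ : ∀ i j l, i < j → j < l → jac Pi x i j l = 0) (i j l : Fin 5) : jac Pi x i j l = 0 := by
  have hd : ∀ m i j, pd5 m (fun y => Pi y i j) x = -pd5 m (fun y => Pi y j i) x := by
    intro m i j
    rw [← pd5_neg]; congr 1; funext y; exact hanti y i j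
  have hcyc : ∀ i j l, jac Pi x i j l = jac Pi x j l i := fun i j l => by
    simp only [jac]; exact Finset.sum_congr rfl fun m _ => by ring
  have hswap : ∀ i j l, jac Pi x i j l = -jac Pi x j i l := fun i j l => by
    simp only [jac]; rw [← Finset.sum_neg_distrib]
    refine Finset.sum_congr rfl fun m _ => ?_
    rw [hd m i j, hd m j l, hd m l i]; ring
  have hdiag : ∀ i l, jac Pi x i i l = 0 := fun i l => by linarith [hswap i i l]
  have hdiag' : ∀ i l, jac Pi x i l i = 0 := fun i l => by rw [hcyc, hcyc, hdiag]
  have hdiag'' : ∀ i l, jac Pi x l i i = 0 := fun i l => by rw [hcyc, hdiag]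
  rcases lt_trichotomy i j with h1 | rfl | h1
  · rcases lt_trichotomy j l with h2 | rfl | h2
    · exact hJ i j l h1 h2
    · exact hdiag'' _ _
    · rcases lt_trichotomy i l with h3 | rfl | h3
      · rw [hswap, hcyc, hJ i l j h3 h2, neg_zero]
      · exact hdiag' _ _
      · rw [hcyc, hcyc, hJ l i j h3 h1]
  · exact hdiag _ _
  · rcases lt_trichotomy i l with h2 | rfl | h2
    · rw [hswap, hJ j i l h1 h2, neg_zero]
    · exact hdiag' _ _
    · rcases lt_trichotomy j l with h3 | rfl | h3
      · rw [hcyc, hJ j l i h3 h2]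
      · exact hdiag'' _ _
      · rw [hswap, hcyc, hcyc, hJ l j i h3 h1, neg_zero]

/-! ### The coordinate identities -/

/-- The matrix `Π_A` with an arbitrary force `(m1, m2)` in place of `M`, and with `A⁻¹∇(det A)`
replaced by its value `(2aq₁ + c, 2aq₂ + b)`, so that all other contributions are polynomial. -/
noncomputable def PiN (a b c al be ga lam : ℝ) (m1 m2 : (Fin 5 → ℝ) → ℝ) (x : Fin 5 → ℝ) :
    Matrix (Fin 5) (Fin 5) ℝ :=
  let G11 := a * (x 0 * x 0) + c * x 0 + ga
  let G12 := a * (x 0 * x 1) + b / 2 * x 0 + c / 2 * x 1 - be / 2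
  let G22 := a * (x 1 * x 1) + b * x 1 + al
  let F12 := (1/2) * ((2 * a * x 0 + c) * x 3 - (2 * a * x 1 + b) * x 2)
  let Mh1 := m1 x - lam / 2 * (x 4 * (2 * a * x 0 + c))
  let Mh2 := m2 x - lam / 2 * (x 4 * (2 * a * x 1 + b))
  !![0, 0, -(lam/2) * G11, -(lam/2) * G12, x 2;
     0, 0, -(lam/2) * G12, -(lam/2) * G22, x 3;
     (lam/2) * G11, (lam/2) * G12, 0, -(lam/2) * F12, Mh1;
     (lam/2) * G12, (lam/2) * G22, (lam/2) * F12, 0, Mh2;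
     -x 2, -x 3, -Mh1, -Mh2, 0]

lemma PiN_anti (a b c al be ga lam : ℝ) (m1 m2 : (Fin 5 → ℝ) → ℝ) (y : Fin 5 → ℝ) (i j : Fin 5) :
    PiN a b c al be ga lam m1 m2 y i j = -PiN a b c al be ga lam m1 m2 y j i := by
  fin_cases i <;> fin_cases j <;> simp [PiN]

lemma PiN_diff (a b c al be ga lam : ℝ) {m1 m2 : (Fin 5 → ℝ) → ℝ}
    (h1 : Differentiable ℝ m1) (h2 : Differentiable ℝ m2) (i j : Fin 5) :
    Differentiable ℝ fun y => PiN a b c al be ga lam m1 m2 y i j := by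
  fin_cases i <;> fin_cases j <;> simp [PiN] <;> fun_prop

set_option maxHeartbeats 4000000 in
/-- The coordinate Jacobi identities. All but the one for `(p₁, p₂, d)` hold for any force that
depends on `q` only; that one also needs `hcurl`, the expanded form of `∂₂(A m)₁ = ∂₁(A m)₂`. -/
lemma jac_PiN (a b c al be ga lam : ℝ) {m1 m2 : (Fin 5 → ℝ) → ℝ}
    (h1 : Differentiable ℝ m1) (h2 : Differentiable ℝ m2) (x : Fin 5 → ℝ)
    (hm1 : pd5 2 m1 x = 0 ∧ pd5 3 m1 x = 0 ∧ pd5 4 m1 x = 0)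
    (hm2 : pd5 2 m2 x = 0 ∧ pd5 3 m2 x = 0 ∧ pd5 4 m2 x = 0)
    (hcurl : (2 * a * x 1 + b) * m1 x + (a * x 1 ^ 2 + b * x 1 + al) * pd5 1 m1 x
        + (-2 * a * x 0 - c) / 2 * m2 x
        + (-2 * a * x 0 * x 1 - b * x 0 - c * x 1 + be) / 2 * pd5 1 m2 x
      = (-2 * a * x 1 - b) / 2 * m1 x
        + (-2 * a * x 0 * x 1 - b * x 0 - c * x 1 + be) / 2 * pd5 0 m1 x
        + (2 * a * x 0 + c) * m2 x + (a * x 0 ^ 2 + c * x 0 + ga) * pd5 0 m2 x)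
    (i j l : Fin 5) (hij : i < j) (hjl : j < l) :
    jac (PiN a b c al be ga lam m1 m2) x i j l = 0 := by
  obtain ⟨u2, u3, u4⟩ := hm1
  obtain ⟨v2, v3, v4⟩ := hm2
  fin_cases i <;> fin_cases j <;> first
    | (exfalso; revert hij; decide)
    | (fin_cases l <;> first
        | (exfalso; revert hjl; decide)
        | (simp (disch := fun_prop) [jac, PiN, Fin.sum_univ_five, pd5_add, pd5_sub, pd5_neg,
            pd5_mul, pd5_const, pd5_coord, u2, u3, u4, v2, v3, v4]
           try first
            | done
            | ring1
            | linear_combination (lam / 2) * hcurl))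

/-! ### The force -/

section force

variable (a b c al be ga : ℝ)

lemma pr_A22 (r w : ℝ) : pr (fun r _ => a * r ^ 2 + c * r + ga) r w = 2 * a * r + c := by
  have h : HasDerivAt (fun r : ℝ => a * r ^ 2 + c * r + ga) (a * (2 * r) + c) r := by
    simpa using
      (((hasDerivAt_pow 2 r).const_mul a).add ((hasDerivAt_id r).const_mul c)).add_const ga
  rw [pr, h.deriv]; ring

lemma pw_A11 (r w : ℝ) : pw (fun _ w => a * w ^ 2 + b * w + al) r w = 2 * a * w + b :=
  pr_A22 a b al w r

/-- First component of `∇(det A) = A (2aq₁ + c, 2aq₂ + b)`. -/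
lemma pr_det (r w : ℝ) :
    pr (fun r w => (a * w ^ 2 + b * w + al) * (a * r ^ 2 + c * r + ga)
        - ((-2 * a * r * w - b * r - c * w + be) / 2) ^ 2) r w
      = (a * w ^ 2 + b * w + al) * (2 * a * r + c)
        + (-2 * a * r * w - b * r - c * w + be) / 2 * (2 * a * w + b) := by
  have h1 : HasDerivAt (fun r : ℝ => a * r ^ 2 + c * r + ga) (a * (2 * r) + c) r := by
    simpa using
      (((hasDerivAt_pow 2 r).const_mul a).add ((hasDerivAt_id r).const_mul c)).add_const ga
  have h2 : HasDerivAt (fun r : ℝ => (-2 * a * r * w - b * r - c * w + be) / 2)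
      ((-2 * a * w - b) / 2) r := by
    have := ((hasDerivAt_id r).const_mul ((-2 * a * w - b) / 2)).add_const ((be - c * w) / 2)
    rw [mul_one] at this
    refine this.congr_of_eventuallyEq (Filter.Eventually.of_forall fun y => ?_)
    simp only [id]; ring
  have h3 := (h1.const_mul (a * w ^ 2 + b * w + al)).sub (h2.pow 2)
  have h4 := h3.deriv
  simp only [Pi.sub_def, Pi.pow_def] at h4
  rw [pr, h4]; push_cast; ring

/-- Second component of `∇(det A) = A (2aq₁ + c, 2aq₂ + b)`. -/
lemma pw_det (r w : ℝ) :
    pw (fun r w => (a * w ^ 2 + b * w + al) * (a * r ^ 2 + c * r + ga)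
        - ((-2 * a * r * w - b * r - c * w + be) / 2) ^ 2) r w
      = (-2 * a * r * w - b * r - c * w + be) / 2 * (2 * a * r + c)
        + (a * r ^ 2 + c * r + ga) * (2 * a * w + b) := by
  have h := pr_det a c b ga be al w r
  rw [pr] at h
  rw [pw]
  convert h using 1
  · congr 1; funext y; ring
  · ring

/-- The force `m = -(1/2)A⁻¹∇k`, pulled back to the phase space: it is differentiable, depends on
`q` only, makes the covector `A m = -(1/2)∇k` closed (`∂₂(A m)₁ = ∂₁(A m)₂`, expanded), and turns
`PiA` into `PiN`. -/
lemma exists_force {k : ℝ → ℝ → ℝ}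
    (hk : ContDiff ℝ (⊤ : ℕ∞) fun p : ℝ × ℝ => k p.1 p.2)
    (hdet : ∀ r w, (a * w ^ 2 + b * w + al) * (a * r ^ 2 + c * r + ga)
        - ((-2 * a * r * w - b * r - c * w + be) / 2) ^ 2 ≠ 0) :
    ∃ m1 m2 : (Fin 5 → ℝ) → ℝ, Differentiable ℝ m1 ∧ Differentiable ℝ m2
      ∧ (∀ i x, i ≠ 0 → i ≠ 1 → pd5 i m1 x = 0 ∧ pd5 i m2 x = 0)
      ∧ (∀ x, (2 * a * x 1 + b) * m1 x + (a * x 1 ^ 2 + b * x 1 + al) * pd5 1 m1 x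
        + (-2 * a * x 0 - c) / 2 * m2 x
        + (-2 * a * x 0 * x 1 - b * x 0 - c * x 1 + be) / 2 * pd5 1 m2 x
      = (-2 * a * x 1 - b) / 2 * m1 x
        + (-2 * a * x 0 * x 1 - b * x 0 - c * x 1 + be) / 2 * pd5 0 m1 x
        + (2 * a * x 0 + c) * m2 x + (a * x 0 ^ 2 + c * x 0 + ga) * pd5 0 m2 x)
      ∧ ∀ lam, PiA a b c al be ga lam k = PiN a b c al be ga lam m1 m2 := by
  -- `k` as a function on the phase space, so that `pr k` and `pw k` become `pd5` derivatives
  have hκ : ContDiff ℝ (⊤ : ℕ∞) fun y : Fin 5 → ℝ => k (y 0) (y 1) :=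
    hk.comp ((contDiff_apply ℝ ℝ (0 : Fin 5)).prodMk (contDiff_apply ℝ ℝ (1 : Fin 5)))
  set κ : (Fin 5 → ℝ) → ℝ := fun y => k (y 0) (y 1) with hκdef
  have hκd : Differentiable ℝ κ := hκ.differentiable (by simp)
  have hκ0 : Differentiable ℝ (pd5 0 κ) := differentiable_pd5 hκ 0
  have hκ1 : Differentiable ℝ (pd5 1 κ) := differentiable_pd5 hκ 1
  have hpr : ∀ y : Fin 5 → ℝ, pr k (y 0) (y 1) = pd5 0 κ y := by
    intro y
    rw [pd5_eq_lineDeriv (hκd y)]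
    simp only [hκdef, pr, Pi.add_apply, Pi.smul_apply, Pi.single_apply, smul_eq_mul]
    simp
    rw [deriv_comp_const_add (f := fun r => k r (y 1))]
    simp
  have hpw : ∀ y : Fin 5 → ℝ, pw k (y 0) (y 1) = pd5 1 κ y := by
    intro y
    rw [pd5_eq_lineDeriv (hκd y)]
    simp only [hκdef, pw, Pi.add_apply, Pi.smul_apply, Pi.single_apply, smul_eq_mul]
    simp
    rw [deriv_comp_const_add (f := fun w => k (y 0) w)]
    simp
  obtain ⟨A11, hA11⟩ : ∃ A : (Fin 5 → ℝ) → ℝ, A = fun y => a * (y 1 * y 1) + b * y 1 + al :=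
    ⟨_, rfl⟩
  obtain ⟨A12, hA12⟩ : ∃ A : (Fin 5 → ℝ) → ℝ,
      A = fun y => -(a * (y 0 * y 1)) - b / 2 * y 0 - c / 2 * y 1 + be / 2 := ⟨_, rfl⟩
  obtain ⟨A22, hA22⟩ : ∃ A : (Fin 5 → ℝ) → ℝ, A = fun y => a * (y 0 * y 0) + c * y 0 + ga :=
    ⟨_, rfl⟩
  obtain ⟨m1, hm1⟩ : ∃ m : (Fin 5 → ℝ) → ℝ, m = fun y =>
      -(1/2) * ((A22 y * pd5 0 κ y - A12 y * pd5 1 κ y) / (A11 y * A22 y - A12 y ^ 2)) :=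
    ⟨_, rfl⟩
  obtain ⟨m2, hm2⟩ : ∃ m : (Fin 5 → ℝ) → ℝ, m = fun y =>
      -(1/2) * ((-A12 y * pd5 0 κ y + A11 y * pd5 1 κ y) / (A11 y * A22 y - A12 y ^ 2)) :=
    ⟨_, rfl⟩
  have dA11 : Differentiable ℝ A11 := by rw [hA11]; fun_prop
  have dA12 : Differentiable ℝ A12 := by rw [hA12]; fun_prop
  have dA22 : Differentiable ℝ A22 := by rw [hA22]; fun_prop
  have hD : ∀ y, A11 y * A22 y - A12 y ^ 2 ≠ 0 := by
    intro y
    convert hdet (y 0) (y 1) using 1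
    simp only [hA11, hA12, hA22]; ring
  have dΔ : Differentiable ℝ fun y => A11 y * A22 y - A12 y ^ 2 := by fun_prop
  have dm1 : Differentiable ℝ m1 := by
    have dN : Differentiable ℝ fun y => A22 y * pd5 0 κ y - A12 y * pd5 1 κ y := by fun_prop
    rw [hm1]
    simp only [div_eq_mul_inv]
    exact (dN.mul (dΔ.inv hD)).const_mul _
  have dm2 : Differentiable ℝ m2 := by
    have dN : Differentiable ℝ fun y => -A12 y * pd5 0 κ y + A11 y * pd5 1 κ y := by fun_prop
    rw [hm2]
    simp only [div_eq_mul_inv]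
    exact (dN.mul (dΔ.inv hD)).const_mul _
  -- `A m = -(1/2)∇k`
  have hlin0 : (fun y => A11 y * m1 y + A12 y * m2 y) = fun y => -(1/2) * pd5 0 κ y := by
    funext y
    have := hD y
    simp only [hm1, hm2]
    field_simp
    ring
  have hlin1 : (fun y => A12 y * m1 y + A22 y * m2 y) = fun y => -(1/2) * pd5 1 κ y := by
    funext y
    have hΔ0 := hD y
    simp only [hm1, hm2]
    generalize hΔ : A11 y * A22 y - A12 y ^ 2 = Δ at hΔ0
    field_simp
    rw [← hΔ]
    ring
  refine ⟨m1, m2, dm1, dm2, ?_, ?_, ?_⟩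
  · intro i x h0 h1
    have inv0 : ∀ t : ℝ, pd5 0 κ (x + t • Pi.single i 1) = pd5 0 κ x := fun t => by
      rw [← hpr, ← hpr]; simp [h0.symm, h1.symm]
    have inv1 : ∀ t : ℝ, pd5 1 κ (x + t • Pi.single i 1) = pd5 1 κ x := fun t => by
      rw [← hpw, ← hpw]; simp [h0.symm, h1.symm]
    constructor
    · refine pd5_eq_zero (dm1 x) i fun t => ?_
      simp [hm1, hA11, hA12, hA22, inv0, inv1, h0.symm, h1.symm]
    · refine pd5_eq_zero (dm2 x) i fun t => ?_
      simp [hm2, hA11, hA12, hA22, inv0, inv1, h0.symm, h1.symm]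
  · intro x
    have hcurl : pd5 1 (fun y => A11 y * m1 y + A12 y * m2 y) x
        = pd5 0 (fun y => A12 y * m1 y + A22 y * m2 y) x := by
      rw [hlin0, hlin1, pd5_mul (by fun_prop) (by fun_prop), pd5_mul (by fun_prop) (by fun_prop),
        pd5_const, pd5_const, pd5_comm hκ]
      ring
    rw [pd5_add (by fun_prop) (by fun_prop), pd5_add (by fun_prop) (by fun_prop),
      pd5_mul (dA11 x) (dm1 x), pd5_mul (dA12 x) (dm2 x),
      pd5_mul (dA12 x) (dm1 x), pd5_mul (dA22 x) (dm2 x)] at hcurl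
    have e1 : pd5 1 A11 x = 2 * a * x 1 + b := by
      simp (disch := fun_prop) [hA11, pd5_add, pd5_mul, pd5_const, pd5_coord]; ring
    have e2 : pd5 1 A12 x = -(a * x 0) - c / 2 := by
      simp (disch := fun_prop) [hA12, pd5_add, pd5_sub, pd5_neg, pd5_mul, pd5_const, pd5_coord]
    have e3 : pd5 0 A12 x = -(a * x 1) - b / 2 := by
      simp (disch := fun_prop) [hA12, pd5_add, pd5_sub, pd5_neg, pd5_mul, pd5_const, pd5_coord]
    have e4 : pd5 0 A22 x = 2 * a * x 0 + c := by
      simp (disch := fun_prop) [hA22, pd5_add, pd5_mul, pd5_const, pd5_coord]; ring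
    rw [e1, e2, e3, e4] at hcurl
    simp only [hA11, hA12, hA22] at hcurl
    linear_combination hcurl
  · intro lam
    funext y
    have hdy := hdet (y 0) (y 1)
    have hΔ : A11 y * A22 y - A12 y ^ 2 = (a * y 1 ^ 2 + b * y 1 + al)
        * (a * y 0 ^ 2 + c * y 0 + ga)
        - ((-2 * a * y 0 * y 1 - b * y 0 - c * y 1 + be) / 2) ^ 2 := by
      simp only [hA11, hA12, hA22]; ring
    -- `e1` and `e2` are the components of `A⁻¹∇(det A) = (2aq₁ + c, 2aq₂ + b)`
    have e1 : ((a * y 0 ^ 2 + c * y 0 + ga) * pr (fun r w => (a * w ^ 2 + b * w + al)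
          * (a * r ^ 2 + c * r + ga) - ((-2 * a * r * w - b * r - c * w + be) / 2) ^ 2) (y 0) (y 1)
        - (-2 * a * y 0 * y 1 - b * y 0 - c * y 1 + be) / 2 * pw (fun r w =>
          (a * w ^ 2 + b * w + al) * (a * r ^ 2 + c * r + ga)
            - ((-2 * a * r * w - b * r - c * w + be) / 2) ^ 2) (y 0) (y 1))
        / ((a * y 1 ^ 2 + b * y 1 + al) * (a * y 0 ^ 2 + c * y 0 + ga)
          - ((-2 * a * y 0 * y 1 - b * y 0 - c * y 1 + be) / 2) ^ 2) = 2 * a * y 0 + c := by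
      rw [div_eq_iff hdy, pr_det, pw_det]; ring
    have e2 : (-((-2 * a * y 0 * y 1 - b * y 0 - c * y 1 + be) / 2) * pr (fun r w =>
          (a * w ^ 2 + b * w + al) * (a * r ^ 2 + c * r + ga)
            - ((-2 * a * r * w - b * r - c * w + be) / 2) ^ 2) (y 0) (y 1)
        + (a * y 1 ^ 2 + b * y 1 + al) * pw (fun r w => (a * w ^ 2 + b * w + al)
          * (a * r ^ 2 + c * r + ga) - ((-2 * a * r * w - b * r - c * w + be) / 2) ^ 2) (y 0) (y 1))
        / ((a * y 1 ^ 2 + b * y 1 + al) * (a * y 0 ^ 2 + c * y 0 + ga)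
          - ((-2 * a * y 0 * y 1 - b * y 0 - c * y 1 + be) / 2) ^ 2) = 2 * a * y 1 + b := by
      rw [div_eq_iff hdy, pr_det, pw_det]; ring
    have entries : ∀ {u₁ u₂ u₃ u₄ u₅ u₆ v₁ v₂ v₃ v₄ v₅ v₆ : ℝ}, u₁ = v₁ → u₂ = v₂ → u₃ = v₃ →
        u₄ = v₄ → u₅ = v₅ → u₆ = v₆ →
        !![0, 0, -(lam/2) * u₁, -(lam/2) * u₂, y 2;
          0, 0, -(lam/2) * u₂, -(lam/2) * u₃, y 3;
          (lam/2) * u₁, (lam/2) * u₂, 0, -(lam/2) * u₄, u₅;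
          (lam/2) * u₂, (lam/2) * u₃, (lam/2) * u₄, 0, u₆;
          -y 2, -y 3, -u₅, -u₆, 0]
        = !![0, 0, -(lam/2) * v₁, -(lam/2) * v₂, y 2;
          0, 0, -(lam/2) * v₂, -(lam/2) * v₃, y 3;
          (lam/2) * v₁, (lam/2) * v₂, 0, -(lam/2) * v₄, v₅;
          (lam/2) * v₂, (lam/2) * v₃, (lam/2) * v₄, 0, v₆;
          -y 2, -y 3, -v₅, -v₆, 0] := by
      rintro _ _ _ _ _ _ _ _ _ _ _ _ rfl rfl rfl rfl rfl rfl
      rfl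
    simp only [PiA, PiN]
    refine entries (by ring) (by ring) (by ring) ?_ ?_ ?_
    · rw [pr_A22, pw_A11]
    · rw [e1, hpr, hpw]
      simp only [hm1, hΔ]
      simp only [hA12, hA22]
      ring
    · rw [e2, hpr, hpw]
      simp only [hm2, hΔ]
      simp only [hA11, hA12]
      ring

end force

/-- the antisymmetric matrix `Π_A` satisfies the Jacobi identity,
hence defines a Poisson structure, provided `A` is a symmetric `2×2` matrix
satisfying the cyclic conditions. -/
theorem stmt_13 (a b c al be ga lam : ℝ) (k : ℝ → ℝ → ℝ)
    (hk : ContDiff ℝ (⊤ : ℕ∞) fun p : ℝ × ℝ => k p.1 p.2)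
    (hdet : ∀ r w, (a * w ^ 2 + b * w + al) * (a * r ^ 2 + c * r + ga)
        - ((-2 * a * r * w - b * r - c * w + be) / 2) ^ 2 ≠ 0) :
    ∀ f g h : (Fin 5 → ℝ) → ℝ,
      ContDiff ℝ (⊤ : ℕ∞) f → ContDiff ℝ (⊤ : ℕ∞) g → ContDiff ℝ (⊤ : ℕ∞) h →
      ∀ x, brk (PiA a b c al be ga lam k) (brk (PiA a b c al be ga lam k) f g) h x
        + brk (PiA a b c al be ga lam k) (brk (PiA a b c al be ga lam k) g h) f x
        + brk (PiA a b c al be ga lam k) (brk (PiA a b c al be ga lam k) h f) g x = 0 := by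
  intro f g h hf hg hh x
  obtain ⟨m1, m2, h1, h2, hz, hcurl, hPi⟩ := exists_force a b c al be ga hk hdet
  rw [hPi]
  refine jacobi_of_jac (PiN_diff a b c al be ga lam h1 h2) (PiN_anti a b c al be ga lam m1 m2) x
    (jac_eq_zero (PiN_anti a b c al be ga lam m1 m2) x
      (jac_PiN a b c al be ga lam h1 h2 x ?_ ?_ (hcurl x))) hf hg hh
  · exact ⟨(hz 2 x (by decide) (by decide)).1, (hz 3 x (by decide) (by decide)).1,
      (hz 4 x (by decide) (by decide)).1⟩
  · exact ⟨(hz 2 x (by decide) (by decide)).2, (hz 3 x (by decide) (by decide)).2,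
      (hz 4 x (by decide) (by decide)).2⟩
end
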